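/- Kernel convergence in the weak non-unitarity regime (equation (2.15), case (b)). Under the weak non-unitarity setup with zooming point p = 1, as N → ∞ the rescaled kernel κ̃_N(z,w) converges to e^{−z²−w²} κ_w(z,w) uniformly for (z,w) in compact subsets of ℂ × ℂ. -/

import Mathlib

open MeasureTheory Filter Finset

noncomputable section

namespace SI

/-- The kernel `G_N(ζ,η)` built from the skew-orthogonal polynomials of the
symplectic induced spherical ensemble (all powers are principal-branch `cpow`s,
which agree with the integer powers whenever `2L` is a nonnegative integer). -/
def GK (N : ℕ) (n L : ℝ) (ζ η : ℂ) : ℂ :=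
  ((Real.pi : ℂ) * Complex.Gamma ((2*n+2*L+2 : ℝ) : ℂ) / (2:ℂ) ^ ((2*n+2*L+1 : ℝ) : ℂ)) *
  ∑ k ∈ range N, ∑ l ∈ range (k+1),
    ζ ^ ((2*k+2*L+1 : ℝ) : ℂ) * η ^ ((2*l+2*L : ℝ) : ℂ) /
      (Complex.Gamma ((k+L+3/2 : ℝ) : ℂ) * Complex.Gamma ((n-k : ℝ) : ℂ) *
       Complex.Gamma ((n-l+1/2 : ℝ) : ℂ) * Complex.Gamma ((l+L+1 : ℝ) : ℂ))

/-- The skew-symmetric kernel `κ̂_N(ζ,η) = G_N(ζ,η) - G_N(η,ζ)`. -/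
def KK (N : ℕ) (n L : ℝ) (ζ η : ℂ) : ℂ := GK N n L ζ η - GK N n L η ζ

/-- The density value `δ = ((n+L)/N)(1+p²)⁻²`. -/
def dlt (N : ℕ) (n L p : ℝ) : ℝ := ((n+L)/N) * (1+p^2)^(-2 : ℝ)

/-- `√(Nδ)`. -/
def sc (N : ℕ) (n L p : ℝ) : ℝ := Real.sqrt (N * dlt N n L p)

/-- The rescaled kernel `κ̃_N(z,w)`. -/
def resc (N : ℕ) (n L p : ℝ) (z w : ℂ) : ℂ :=
  (((1+p^2) ^ (-3 : ℝ) : ℝ) : ℂ) * (((N * dlt N n L p) ^ (-(3/2) : ℝ) : ℝ) : ℂ) *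
  ((1 + ((p:ℂ) + z / (sc N n L p : ℂ))^2) * (1 + ((p:ℂ) + w / (sc N n L p : ℂ))^2))
      ^ ((-(n+L-1/2) : ℝ) : ℂ) *
  KK N n L ((p:ℂ) + z / (sc N n L p : ℂ)) ((p:ℂ) + w / (sc N n L p : ℂ))

/-- The entire extension of the error function: `erf(z) = (2/√π)∫₀¹ z e^{-s²z²} ds`. -/
def cerf (z : ℂ) : ℂ :=
  (2 / (Real.sqrt Real.pi : ℂ)) * ∫ s in (0:ℝ)..1, z * Complex.exp (-((s:ℂ)^2 * z^2))

/-- `erfc(z) = 1 - erf(z)`. -/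
def cerfc (z : ℂ) : ℂ := 1 - cerf z

/-- `f_z(u) = (1/2) erfc(√2 (z-u))`. -/
def fz (z : ℂ) (u : ℝ) : ℂ := (1/2) * cerfc ((Real.sqrt 2 : ℂ) * (z - (u:ℂ)))

/-- The Wronskian `W(f_w, f_z)(u) = f_w(u) f_z'(u) - f_z(u) f_w'(u)` (derivative in `u`). -/
def Wr (w z : ℂ) (u : ℝ) : ℂ := fz w u * deriv (fz z) u - fz z u * deriv (fz w) u

/-- The interpolating kernel `κ_w` of the weak non-unitarity regime,
with `α = ρ/(2√2)`. -/
def kweak (ρ : ℝ) (z w : ℂ) : ℂ :=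
  (Real.sqrt Real.pi : ℂ) * Complex.exp (z^2+w^2) *
    ((∫ u in (-(ρ/(2*Real.sqrt 2)))..(ρ/(2*Real.sqrt 2)), Wr w z u)
      + fz w (ρ/(2*Real.sqrt 2)) * fz z (-(ρ/(2*Real.sqrt 2)))
      - fz z (ρ/(2*Real.sqrt 2)) * fz w (-(ρ/(2*Real.sqrt 2))))

/-- The admissible system sizes in the weak non-unitarity regime:
`N ≥ ρ²` for which `n = N²/ρ²` is an integer. -/
def Sweak (ρ : ℝ) : Set ℕ :=
  {N | ρ^2 ≤ (N : ℝ) ∧ ∃ nm : ℕ, (nm : ℝ) = (N:ℝ)^2/ρ^2}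


/-! ### Gamma function estimates -/

def lg (x : ℝ) : ℝ := Real.log (Real.Gamma x)

lemma lg_add_one {x : ℝ} (hx : 0 < x) : lg (x+1) = lg x + Real.log x := by
  unfold lg
  rw [Real.Gamma_add_one hx.ne', Real.log_mul hx.ne' (Real.Gamma_pos_of_pos hx).ne', add_comm]

lemma lg_conv {x y t : ℝ} (hx : 0 < x) (hy : 0 < y) (h0 : 0 ≤ t) (h1 : t ≤ 1) :
    lg ((1-t) * x + t * y) ≤ (1-t) * lg x + t * lg y := by
  have := Real.convexOn_log_Gamma.2 (Set.mem_Ioi.2 hx) (Set.mem_Ioi.2 hy)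
    (sub_nonneg.2 h1) h0 (by ring)
  simpa [lg] using this

def ph (a x : ℝ) : ℝ := lg (a+x) + lg (a-x) - 2 * lg a

lemma ph_nonneg {a x : ℝ} (h1 : x < a) (h2 : -a < x) : 0 ≤ ph a x := by
  have := lg_conv (x := a+x) (y := a-x) (t := 1/2) (by linarith) (by linarith)
    (by norm_num) (by norm_num)
  rw [show (1-1/2) * (a+x) + 1/2 * (a-x) = a by ring] at this
  unfold ph; linarith

lemma ph_neg (a x : ℝ) : ph a (-x) = ph a x := by
  unfold ph; rw [sub_neg_eq_add, ← sub_eq_add_neg]; ring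

lemma ph_small {a r : ℝ} (ha : 1 < a) (h0 : 0 ≤ r) (h1 : r ≤ 1) : ph a r ≤ 1/(a-1) := by
  have e1 := lg_conv (x := a) (y := a+1) (t := r) (by linarith) (by linarith) h0 h1
  have e2 := lg_conv (x := a) (y := a-1) (t := r) (by linarith) (by linarith) h0 h1
  rw [show (1-r)*a + r*(a+1) = a + r by ring] at e1
  rw [show (1-r)*a + r*(a-1) = a - r by ring] at e2
  have e3 := lg_add_one (x := a) (by linarith)
  have e4 := lg_add_one (x := a-1) (by linarith)
  rw [sub_add_cancel] at e4
  have e5 : Real.log a - Real.log (a-1) ≤ 1/(a-1) := by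
    rw [← Real.log_div (by linarith) (by linarith)]
    have := Real.log_le_sub_one_of_pos (x := a/(a-1)) (div_pos (by linarith) (by linarith))
    have h : a/(a-1) - 1 = 1/(a-1) := by
      have : a - 1 ≠ 0 := by linarith
      field_simp; ring
    linarith
  have e6 : 0 ≤ Real.log a - Real.log (a-1) := by
    have := Real.log_le_log (x := a-1) (y := a) (by linarith) (by linarith)
    linarith
  unfold ph
  have : r * (Real.log a - Real.log (a-1)) ≤ Real.log a - Real.log (a-1) := by
    nlinarith
  nlinarith

lemma ph_step {a x X : ℝ} (h0 : 0 ≤ x) (hX : x + 1 ≤ X) (ha : X < a) :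
    ((x+1)^2 - x^2)/(a+X) ≤ ph a (x+1) - ph a x ∧
    ph a (x+1) - ph a x ≤ ((x+1)^2 - x^2)/(a-X) := by
  have e3 := lg_add_one (x := a+x) (by linarith)
  have e4 := lg_add_one (x := a-x-1) (by linarith)
  have e : ph a (x+1) - ph a x = Real.log ((a+x)/(a-x-1)) := by
    rw [Real.log_div (by linarith) (by linarith)]
    unfold ph
    rw [show a + (x+1) = a + x + 1 by ring, show a - (x+1) = a - x - 1 by ring,
      show a - x = a - x - 1 + 1 by ring, e3, e4]; ring_nf
  have hp : 0 < (a+x)/(a-x-1) := div_pos (by linarith) (by linarith)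
  rw [e]
  constructor
  · have := Real.one_sub_inv_le_log_of_pos hp
    refine le_trans ?_ this
    have : 1 - ((a+x)/(a-x-1))⁻¹ = ((x+1)^2-x^2)/(a+x) := by
      have : a + x ≠ 0 := by linarith
      rw [inv_div]; field_simp; ring
    rw [this]
    apply div_le_div_of_nonneg_left <;> nlinarith
  · have := Real.log_le_sub_one_of_pos hp
    refine le_trans this ?_
    have : ((a+x)/(a-x-1)) - 1 = ((x+1)^2-x^2)/(a-x-1) := by
      have : a - x - 1 ≠ 0 := by linarith
      field_simp; ring
    rw [this]
    apply div_le_div_of_nonneg_left <;> nlinarith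

lemma ph_ind {a r X : ℝ} (h0 : 0 ≤ r) (ha : X < a) (j : ℕ) (hj : r + j ≤ X) :
    ((r+j)^2 - r^2)/(a+X) ≤ ph a (r+j) - ph a r ∧
    ph a (r+j) - ph a r ≤ ((r+j)^2 - r^2)/(a-X) := by
  induction j with
  | zero => simp
  | succ j ih =>
    push_cast at hj ⊢
    obtain ⟨i1, i2⟩ := ih (by linarith)
    have hj0 : (0:ℝ) ≤ j := j.cast_nonneg
    obtain ⟨s1, s2⟩ := ph_step (a := a) (x := r+j) (X := X) (by linarith) (by linarith) ha
    rw [show r + ((j:ℝ)+1) = r + j + 1 by ring]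
    constructor
    · calc ((r+j+1)^2 - r^2)/(a+X)
          = ((r+j)^2 - r^2)/(a+X) + ((r+j+1)^2-(r+j)^2)/(a+X) := by ring
        _ ≤ _ := by linarith
    · calc ph a (r+j+1) - ph a r
          ≤ ((r+j)^2 - r^2)/(a-X) + ((r+j+1)^2-(r+j)^2)/(a-X) := by linarith
        _ = _ := by ring

lemma ph_bounds {a x : ℝ} (h0 : 0 ≤ x) (ha : x < a) (ha1 : 1 < a) :
    (x^2-1)/(a+x) ≤ ph a x ∧ ph a x ≤ x^2/(a-x) + 1/(a-1) := by
  have hf := Int.fract_nonneg x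
  have hf1 := (Int.fract_lt_one x).le
  have hx : Int.fract x + (⌊x⌋₊ : ℝ) = x := by
    have := Int.fract_add_floor x
    rw [← natCast_floor_eq_intCast_floor h0] at this
    exact this
  obtain ⟨i1, i2⟩ := ph_ind (a := a) (r := Int.fract x) (X := x) hf ha ⌊x⌋₊ hx.le
  rw [hx] at i1 i2
  have s1 := ph_small ha1 hf hf1
  have s2 := ph_nonneg (a := a) (x := Int.fract x) (by linarith) (by linarith)
  constructor
  · have : (x^2-1)/(a+x) ≤ (x^2 - Int.fract x^2)/(a+x) := by
      apply div_le_div_of_nonneg_right _ (by linarith)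
      nlinarith
    linarith
  · have : (x^2 - Int.fract x^2)/(a-x) ≤ x^2/(a-x) := by
      apply div_le_div_of_nonneg_right _ (by linarith)
      nlinarith
    linarith

lemma ph_bounds' {a x : ℝ} (ha : |x| < a) (ha1 : 1 < a) :
    (|x|^2-1)/(a+|x|) ≤ ph a x ∧ ph a x ≤ |x|^2/(a-|x|) + 1/(a-1) := by
  have h := ph_bounds (abs_nonneg x) ha ha1
  rcases abs_cases x with ⟨h1, _⟩ | ⟨h1, _⟩
  · rw [h1] at h ⊢; exact h
  · have : ph a |x| = ph a x := by rw [h1, ph_neg]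
    rw [this] at h; exact h

lemma Gam_eq {a x : ℝ} (h : |x| < a) :
    Real.Gamma (a+x) * Real.Gamma (a-x) = Real.Gamma a ^ 2 * Real.exp (ph a x) := by
  have h' := abs_lt.1 h
  have p1 := Real.Gamma_pos_of_pos (s := a+x) (by linarith)
  have p2 := Real.Gamma_pos_of_pos (s := a-x) (by linarith)
  have p3 := Real.Gamma_pos_of_pos (s := a) (by linarith)
  unfold ph lg
  rw [Real.exp_sub, Real.exp_add, Real.exp_log p1, Real.exp_log p2,
    show 2 * Real.log (Real.Gamma a) = Real.log (Real.Gamma a ^ 2) by rw [Real.log_pow]; norm_num,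
    Real.exp_log (by positivity)]
  field_simp

def DG (s : ℝ) : ℝ := Real.Gamma (s+1/2) / (Real.Gamma s * Real.sqrt s)

lemma DG_sq {s : ℝ} (hs : 0 < s) : s/(s+1/2) ≤ DG s ^ 2 ∧ DG s ^ 2 ≤ 1 := by
  have p1 := Real.Gamma_pos_of_pos hs
  have p2 := Real.Gamma_pos_of_pos (s := s+1/2) (by linarith)
  have e1 := Gam_eq (a := s+1/2) (x := 1/2) (by rw [abs_of_pos] <;> linarith)
  have e2 := Gam_eq (a := s+1) (x := 1/2) (by rw [abs_of_pos] <;> linarith)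
  have n1 := ph_nonneg (a := s+1/2) (x := 1/2) (by linarith) (by linarith)
  have n2 := ph_nonneg (a := s+1) (x := 1/2) (by linarith) (by linarith)
  rw [show s + 1/2 + 1/2 = s + 1 by ring, show s + 1/2 - 1/2 = s by ring,
    Real.Gamma_add_one hs.ne'] at e1
  rw [show s + 1 + 1/2 = s + 1/2 + 1 by ring, show s + 1 - 1/2 = s + 1/2 by ring,
    Real.Gamma_add_one hs.ne', Real.Gamma_add_one (s := s+1/2) (by linarith)] at e2
  have n1' := Real.one_le_exp n1
  have n2' := Real.one_le_exp n2
  have : DG s ^ 2 = Real.Gamma (s+1/2)^2 / (Real.Gamma s ^ 2 * s) := by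
    unfold DG; rw [div_pow, mul_pow, Real.sq_sqrt hs.le]
  rw [this]
  constructor
  · rw [div_le_div_iff₀ (by linarith) (by positivity)]
    have : (s * Real.Gamma s)^2 * 1 ≤ (s * Real.Gamma s)^2 * Real.exp (ph (s+1) (1/2)) := by
      gcongr
    nlinarith
  · rw [div_le_one (by positivity)]
    have : (Real.Gamma (s+1/2))^2 * 1 ≤ (Real.Gamma (s+1/2))^2 * Real.exp (ph (s+1/2) (1/2)) := by
      gcongr
    nlinarith

lemma DG_tendsto : Tendsto DG atTop (nhds 1) := by
  have h : Tendsto (fun s => DG s ^ 2) atTop (nhds 1) := by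
    have l1 : Tendsto (fun s : ℝ => s/(s+1/2)) atTop (nhds 1) := by
      have : Tendsto (fun s : ℝ => 1 - (1/2) * (s+1/2)⁻¹) atTop (nhds (1 - (1/2) * 0)) := by
        refine tendsto_const_nhds.sub (Tendsto.const_mul _ ?_)
        exact tendsto_inv_atTop_zero.comp (tendsto_atTop_add_const_right _ _ tendsto_id)
      rw [mul_zero, sub_zero] at this
      refine this.congr' ?_
      filter_upwards [eventually_gt_atTop 0] with s hs
      have : s + 1/2 ≠ 0 := by linarith
      field_simp; ring
    refine tendsto_of_tendsto_of_tendsto_of_le_of_le' l1 tendsto_const_nhds ?_ ?_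
    · filter_upwards [eventually_gt_atTop 0] with s hs using (DG_sq hs).1
    · filter_upwards [eventually_gt_atTop 0] with s hs using (DG_sq hs).2
  have h2 := (Real.continuous_sqrt.tendsto 1).comp h
  rw [Real.sqrt_one] at h2
  refine h2.congr' ?_
  filter_upwards [eventually_gt_atTop 0] with s hs
  have p1 := Real.Gamma_pos_of_pos hs
  have p2 := Real.Gamma_pos_of_pos (s := s+1/2) (by linarith)
  exact Real.sqrt_sq (by unfold DG; positivity)


/-! ### Local limit asymptotics -/

def cf (M x : ℝ) : ℝ :=
  Real.sqrt M * ((2:ℝ)^(-(M-1/2)) * Real.Gamma (M+1/2) /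
    (Real.Gamma (M/2+3/4+x) * Real.Gamma (M/2+3/4-x)))

def c0 (M : ℝ) : ℝ := Real.sqrt (M/(M/2+1/4)) / (Real.sqrt Real.pi * DG (M/2+1/4))

lemma cf_eq {M x : ℝ} (hM : 0 < M) (hx : |x| < M/2+3/4) :
    cf M x = c0 M * Real.exp (-ph (M/2+3/4) x) := by
  have hd := Real.Gamma_mul_Gamma_add_half (M/2+1/4)
  rw [show 2 * (M/2+1/4) = M + 1/2 by ring, show M/2+1/4+1/2 = M/2+3/4 by ring,
    show (1:ℝ) - (M+1/2) = -(M-1/2) by ring] at hd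
  unfold cf
  rw [Gam_eq hx]
  have p1 := Real.Gamma_pos_of_pos (s := M/2+1/4) (by linarith)
  have p2 := Real.Gamma_pos_of_pos (s := M/2+3/4) (by linarith)
  have p3 : 0 < Real.sqrt Real.pi := Real.sqrt_pos.2 Real.pi_pos
  have p4 : 0 < Real.sqrt (M/2+1/4) := Real.sqrt_pos.2 (by linarith)
  have hd' : (2:ℝ)^(-(M-1/2)) * Real.Gamma (M+1/2) =
      Real.Gamma (M/2+1/4) * Real.Gamma (M/2+3/4) / Real.sqrt Real.pi := by
    rw [hd]; field_simp
  unfold c0 DG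
  rw [hd', show M/2+1/4+1/2 = M/2+3/4 by ring, Real.exp_neg, Real.sqrt_div hM.le]
  field_simp

lemma c0_tendsto : Tendsto c0 atTop (nhds (Real.sqrt (2/Real.pi))) := by
  have hs : Tendsto (fun M : ℝ => M/2+1/4) atTop atTop :=
    tendsto_atTop_add_const_right _ _ (tendsto_id.atTop_div_const (by norm_num))
  have h1 : Tendsto (fun M : ℝ => M/(M/2+1/4)) atTop (nhds 2) := by
    have : Tendsto (fun M : ℝ => 2 - (1/2) * (M/2+1/4)⁻¹) atTop (nhds (2 - (1/2) * 0)) :=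
      tendsto_const_nhds.sub (Tendsto.const_mul _ (tendsto_inv_atTop_zero.comp hs))
    rw [mul_zero, sub_zero] at this
    refine this.congr' ?_
    filter_upwards [eventually_gt_atTop 0] with s hs
    have : s/2 + 1/4 ≠ 0 := by linarith
    field_simp; ring
  have h2 := (Real.continuous_sqrt.tendsto 2).comp h1
  have h3 := (DG_tendsto.comp hs).const_mul (Real.sqrt Real.pi)
  have h4 := h2.div h3 (by rw [mul_one]; exact (Real.sqrt_pos.2 Real.pi_pos).ne')
  rw [mul_one, ← Real.sqrt_div (by norm_num)] at h4
  exact h4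

section lim
variable {ι : Type*} {l : Filter ι}

lemma ph_tendsto {M x : ι → ℝ} {u : ℝ} (hM : Tendsto M l atTop)
    (hx : Tendsto (fun i => x i / Real.sqrt (M i)) l (nhds u)) :
    Tendsto (fun i => ph (M i/2+3/4) (x i)) l (nhds (2*u^2)) := by
  have hM0 := hM.eventually_gt_atTop 0
  have hMi : Tendsto (fun i => (M i)⁻¹) l (nhds 0) := tendsto_inv_atTop_zero.comp hM
  have hsi : Tendsto (fun i => (Real.sqrt (M i))⁻¹) l (nhds 0) :=
    tendsto_inv_atTop_zero.comp (Real.tendsto_sqrt_atTop.comp hM)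
  have hxa : Tendsto (fun i => |x i| / Real.sqrt (M i)) l (nhds |u|) := by
    refine hx.abs.congr fun i => ?_
    rw [abs_div, abs_of_nonneg (Real.sqrt_nonneg _)]
  have hxM : Tendsto (fun i => |x i| / M i) l (nhds 0) := by
    have := hxa.mul hsi
    rw [mul_zero] at this
    refine this.congr' ?_
    filter_upwards [hM0] with i hi
    rw [← div_eq_mul_inv, div_div, Real.mul_self_sqrt hi.le]
  have hx2 : Tendsto (fun i => |x i|^2 / M i) l (nhds (u^2)) := by
    have := hxa.pow 2
    rw [sq_abs] at this
    refine this.congr' ?_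
    filter_upwards [hM0] with i hi
    rw [div_pow, Real.sq_sqrt hi.le]
  have hlt : ∀ᶠ i in l, |x i| < M i/2+3/4 := by
    filter_upwards [hM0, hxM.eventually_lt_const (show (0:ℝ) < 1/2 by norm_num)] with i hi h
    rw [div_lt_iff₀ hi] at h; linarith
  have h1 : ∀ᶠ i in l, 1 < M i/2+3/4 := by
    filter_upwards [hM.eventually_gt_atTop 1] with i hi
    linarith
  have hlo : Tendsto (fun i => (|x i|^2 / M i - (M i)⁻¹) / (1/2 + 3/4 * (M i)⁻¹ + |x i|/M i)) l
      (nhds ((u^2 - 0)/(1/2 + 3/4*0 + 0))) := by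
    refine (hx2.sub hMi).div ((tendsto_const_nhds.add (hMi.const_mul _)).add hxM) (by norm_num)
  have hhi : Tendsto (fun i => (|x i|^2 / M i) / (1/2 + 3/4 * (M i)⁻¹ - |x i|/M i) +
      (M i)⁻¹ / (1/2 - 1/4 * (M i)⁻¹)) l
      (nhds ((u^2)/(1/2 + 3/4*0 - 0) + 0/(1/2-1/4*0))) := by
    refine (hx2.div ((tendsto_const_nhds.add (hMi.const_mul _)).sub hxM) (by norm_num)).add
      (hMi.div (tendsto_const_nhds.sub (hMi.const_mul _)) (by norm_num))
  rw [show (u^2 - 0)/(1/2 + 3/4*0 + 0) = 2*u^2 by ring] at hlo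
  rw [show (u^2)/(1/2 + 3/4*0 - 0) + 0/(1/2-1/4*0) = 2*u^2 by ring] at hhi
  refine tendsto_of_tendsto_of_tendsto_of_le_of_le' hlo hhi ?_ ?_
  · filter_upwards [hM0, hlt, h1] with i hi h2 h3
    refine le_of_eq_of_le ?_ (ph_bounds' h2 h3).1
    rw [← mul_div_mul_right _ _ hi.ne']
    congr 1 <;> field_simp
  · filter_upwards [hM0, hlt, h1] with i hi h2 h3
    refine le_of_le_of_eq (ph_bounds' h2 h3).2 ?_
    rw [← mul_div_mul_right (|x i|^2/M i) _ hi.ne', ← mul_div_mul_right ((M i)⁻¹) _ hi.ne']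
    congr 2 <;> field_simp
    ring

lemma cf_tendsto {M x : ι → ℝ} {u : ℝ} (hM : Tendsto M l atTop)
    (hx : Tendsto (fun i => x i / Real.sqrt (M i)) l (nhds u)) :
    Tendsto (fun i => cf (M i) (x i)) l (nhds (Real.sqrt (2/Real.pi) * Real.exp (-(2*u^2)))) := by
  have h := (c0_tendsto.comp hM).mul ((Real.continuous_exp.tendsto _).comp (ph_tendsto hM hx).neg)
  refine h.congr' ?_
  have hsi : Tendsto (fun i => (Real.sqrt (M i))⁻¹) l (nhds 0) :=
    tendsto_inv_atTop_zero.comp (Real.tendsto_sqrt_atTop.comp hM)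
  have hxM : Tendsto (fun i => |x i / Real.sqrt (M i) * (Real.sqrt (M i))⁻¹|) l (nhds 0) := by
    simpa using (hx.mul hsi).abs
  filter_upwards [hM.eventually_gt_atTop 0,
    hxM.eventually_lt_const (show (0:ℝ) < 1/2 by norm_num)] with i hi h
  rw [← div_eq_mul_inv, div_div, Real.mul_self_sqrt hi.le, abs_div, abs_of_pos hi,
    div_lt_iff₀ hi] at h
  rw [cf_eq hi (by linarith)]; rfl

lemma cf_bound : ∀ᶠ M : ℝ in atTop, ∀ x, |x| < M/2+3/4 → |cf M x| ≤ 1 := by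
  have h1 : Real.sqrt (2/Real.pi) < 1 := by
    rw [Real.sqrt_lt' one_pos, one_pow, div_lt_one Real.pi_pos]
    linarith [Real.pi_gt_three]
  have h0 : 0 < Real.sqrt (2/Real.pi) := Real.sqrt_pos.2 (div_pos two_pos Real.pi_pos)
  filter_upwards [eventually_gt_atTop 0, c0_tendsto.eventually_lt_const h1,
    c0_tendsto.eventually_const_lt h0] with M hM hc hc' x hx
  rw [cf_eq hM hx, abs_mul, abs_of_pos hc', abs_of_pos (Real.exp_pos _)]
  have := ph_nonneg (a := M/2+3/4) (x := x) (abs_lt.1 hx).2 (abs_lt.1 hx).1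
  have : Real.exp (-ph (M/2+3/4) x) ≤ 1 := Real.exp_le_one_iff.2 (by linarith)
  exact mul_le_one₀ hc.le (Real.exp_pos _).le this

lemma mul_log_tendsto {c g : ι → ℂ} {t : ℂ} (h : Tendsto (fun i => c i * g i) l (nhds t))
    (hg : Tendsto g l (nhds 0)) : Tendsto (fun i => c i * Complex.log (1 + g i)) l (nhds t) := by
  set f : ℂ → ℂ := fun g => Complex.log (1+g) with hf
  have hd : HasDerivAt f 1 0 := by
    have := (hasDerivAt_id (0:ℂ)).const_add 1 |>.clog (by simp)
    simpa using this
  have hc : ContinuousAt (dslope f 0) 0 := continuousAt_dslope_same.2 hd.differentiableAt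
  have h2 : Tendsto (fun i => dslope f 0 (g i)) l (nhds 1) := by
    have := hc.tendsto.comp hg
    rwa [dslope_same, hd.deriv] at this
  have h3 := h.mul h2
  rw [mul_one] at h3
  refine h3.congr fun i => ?_
  have := sub_smul_dslope f 0 (g i)
  simp only [hf, sub_zero, add_zero, Complex.log_one, smul_eq_mul] at this
  rw [mul_assoc, this]

def ex (M x : ℝ) (h : ℂ) : ℂ :=
  Complex.exp (2*x*Complex.log (1+h) - (M-1/2)*Complex.log (1 + h^2/(2*(1+h))))

section
variable {M : ι → ℝ} {h : ι → ℂ} {z : ℂ} (hM : Tendsto M l atTop)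
  (hh : Tendsto (fun i => (Real.sqrt (M i) : ℂ) * h i) l (nhds (2*z)))
include hM hh

lemma h_zero : Tendsto h l (nhds 0) := by
  have hsi : Tendsto (fun i => (((Real.sqrt (M i))⁻¹ : ℝ) : ℂ)) l (nhds ((0:ℝ):ℂ)) :=
    (Complex.continuous_ofReal.tendsto _).comp
      (tendsto_inv_atTop_zero.comp (Real.tendsto_sqrt_atTop.comp hM))
  have := hsi.mul hh
  rw [Complex.ofReal_zero, zero_mul] at this
  refine this.congr' ?_
  filter_upwards [hM.eventually_gt_atTop 0] with i hi
  have : (Real.sqrt (M i) : ℂ) ≠ 0 := by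
    exact_mod_cast (Real.sqrt_pos.2 hi).ne'
  push_cast
  field_simp

lemma log1 : Tendsto (fun i => (Real.sqrt (M i) : ℂ) * Complex.log (1 + h i)) l (nhds (2*z)) :=
  mul_log_tendsto hh (h_zero hM hh)

lemma log2 : Tendsto (fun i => ((M i : ℂ) - 1/2) * Complex.log (1 + h i^2/(2*(1+h i)))) l
    (nhds (2*z^2)) := by
  have h0 := h_zero hM hh
  have hq : Tendsto (fun i => (2*(1 + h i))⁻¹) l (nhds (2*(1+0))⁻¹) :=
    ((h0.const_add 1).const_mul 2).inv₀ (by norm_num)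
  apply mul_log_tendsto
  · have e := ((hh.pow 2).sub ((h0.pow 2).const_mul (1/2))).mul hq
    rw [show ((2*z)^2 - 1/2*0^2) * (2*(1+0))⁻¹ = 2*z^2 by ring] at e
    refine e.congr' ?_
    filter_upwards [hM.eventually_gt_atTop 0] with i hi
    rw [mul_pow, ← Complex.ofReal_pow, Real.sq_sqrt hi.le]
    ring
  · have e := (h0.pow 2).mul hq
    rw [show (0:ℂ)^2 * (2*(1+0))⁻¹ = 0 by ring] at e
    exact e

lemma ex_tendsto {x : ι → ℝ} {u : ℝ}
    (hx : Tendsto (fun i => x i / Real.sqrt (M i)) l (nhds u)) :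
    Tendsto (fun i => ex (M i) (x i) (h i)) l (nhds (Complex.exp (4*u*z - 2*z^2))) := by
  have hx' : Tendsto (fun i => ((x i / Real.sqrt (M i) : ℝ) : ℂ)) l (nhds (u:ℂ)) :=
    (Complex.continuous_ofReal.tendsto _).comp hx
  have e := ((hx'.const_mul 2).mul (log1 hM hh)).sub (log2 hM hh)
  rw [show 2*(u:ℂ)*(2*z) - 2*z^2 = 4*u*z - 2*z^2 by ring] at e
  have e' := (Complex.continuous_exp.tendsto _).comp e
  refine e'.congr' ?_
  filter_upwards [hM.eventually_gt_atTop 0] with i hi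
  have : (Real.sqrt (M i) : ℂ) ≠ 0 := by
    exact_mod_cast (Real.sqrt_pos.2 hi).ne'
  unfold ex
  simp only [Function.comp]
  congr 2
  push_cast
  field_simp

lemma ex_bound (B : ℝ) : ∃ C, ∀ᶠ i in l, ∀ x : ℝ, |x| ≤ B * Real.sqrt (M i) →
    ‖ex (M i) x (h i)‖ ≤ C := by
  have e1 := (log1 hM hh).norm.eventually_lt_const (lt_add_one _)
  have e2 := (log2 hM hh).norm.eventually_lt_const (lt_add_one _)
  refine ⟨Real.exp (2 * |B| * (‖2*z‖+1) + (‖2*z^2‖+1)), ?_⟩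
  filter_upwards [e1, e2, hM.eventually_gt_atTop 0] with i h1 h2 hi x hx
  unfold ex
  refine (Complex.norm_exp_le_exp_norm _).trans (Real.exp_le_exp.2 ?_)
  refine (norm_sub_le _ _).trans (add_le_add ?_ h2.le)
  have hs := Real.sqrt_pos.2 hi
  rw [norm_mul] at h1 ⊢
  rw [Complex.norm_real, Real.norm_of_nonneg hs.le] at h1
  rw [norm_mul, Complex.norm_real, Real.norm_eq_abs, Complex.norm_two]
  have hB : |x| ≤ |B| * Real.sqrt (M i) := hx.trans (by gcongr; exact le_abs_self B)
  calc 2 * |x| * ‖Complex.log (1 + h i)‖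
      ≤ 2 * (|B| * Real.sqrt (M i)) * ‖Complex.log (1 + h i)‖ := by gcongr
    _ = 2 * |B| * (Real.sqrt (M i) * ‖Complex.log (1 + h i)‖) := by ring
    _ ≤ _ := by gcongr

end
end lim


/-! ### Riemann sums -/

lemma floor_step {N k : ℕ} (hN : 0 < N) {x : ℝ} (h1 : (k:ℝ)/N < x) (h2 : x < (k+1:ℕ)/(N:ℝ)) :
    ⌊x * N⌋₊ = k := by
  have hN' : (0:ℝ) < N := by exact_mod_cast hN
  rw [div_lt_iff₀ hN'] at h1
  rw [lt_div_iff₀ hN'] at h2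
  push_cast at h2
  rw [Nat.floor_eq_iff (le_trans (Nat.cast_nonneg k) h1.le)]
  exact ⟨h1.le, h2⟩

lemma sum_eq_integral {N : ℕ} (hN : 0 < N) (c : ℕ → ℂ) :
    ∑ k ∈ range N, c k = ∫ s in (0:ℝ)..1, (N:ℂ) * c ⌊s * N⌋₊ := by
  have hN' : (0:ℝ) < N := by exact_mod_cast hN
  have hN0 : (N:ℂ) ≠ 0 := by exact_mod_cast hN.ne'
  have key : ∀ k : ℕ, ∀ᵐ x : ℝ, x ∈ Set.uIoc ((k:ℝ)/N) ((k+1:ℕ)/(N:ℝ)) →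
      (N:ℂ) * c k = (N:ℂ) * c ⌊x * N⌋₊ := by
    intro k
    filter_upwards [Measure.ae_ne volume (((k+1:ℕ):ℝ)/(N:ℝ))] with x hx hx'
    rw [Set.uIoc_of_le (by gcongr; simp)] at hx'
    rw [floor_step hN hx'.1 (lt_of_le_of_ne hx'.2 hx)]
  have h := intervalIntegral.sum_integral_adjacent_intervals
    (f := fun s : ℝ => (N:ℂ) * c ⌊s * N⌋₊) (μ := volume) (a := fun k => (k:ℝ)/N) (n := N) (by
      intro k _
      refine (intervalIntegrable_const (c := (N:ℂ) * c k)).congr_ae ?_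
      rw [Filter.EventuallyEq, ae_restrict_iff' measurableSet_uIoc]
      exact key k)
  simp only [Nat.cast_zero, zero_div, div_self hN'.ne'] at h
  rw [← h]
  refine Finset.sum_congr rfl fun k _ => ?_
  rw [← intervalIntegral.integral_congr_ae (key k), intervalIntegral.integral_const]
  rw [← sub_div]
  push_cast
  rw [add_sub_cancel_left]
  simp [hN0]

section riem
variable {ι : Type*} {l : Filter ι} [l.IsCountablyGenerated]

lemma riemann {N : ι → ℕ} (hN : Tendsto N l atTop) {c : ι → ℕ → ℂ} {φ : ℝ → ℂ} {C : ℝ}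
    (hb : ∀ᶠ i in l, ∀ k < N i, ‖(N i:ℂ) * c i k‖ ≤ C)
    (hφ : ∀ᵐ s : ℝ, s ∈ Set.Ioo (0:ℝ) 1 →
      Tendsto (fun i => (N i:ℂ) * c i ⌊s * N i⌋₊) l (nhds (φ s))) :
    Tendsto (fun i => ∑ k ∈ range (N i), c i k) l (nhds (∫ s in (0:ℝ)..1, φ s)) := by
  have h : Tendsto (fun i => ∫ s in (0:ℝ)..1, (N i:ℂ) * c i ⌊s * N i⌋₊) l
      (nhds (∫ s in (0:ℝ)..1, φ s)) := by
    refine intervalIntegral.tendsto_integral_filter_of_dominated_convergence (fun _ => C)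
      ?_ ?_ intervalIntegrable_const ?_
    · refine Eventually.of_forall fun i => ?_
      refine Measurable.aestronglyMeasurable (measurable_const.mul ?_)
      exact (measurable_from_nat (f := c i)).comp
        (Nat.measurable_floor.comp (measurable_id.mul_const _))
    · filter_upwards [hb, hN.eventually_gt_atTop 0] with i hi h0
      filter_upwards [Measure.ae_ne volume (1:ℝ)] with s hs hs'
      rw [Set.uIoc_of_le zero_le_one] at hs'
      apply hi
      have h0' : (0:ℝ) < N i := by exact_mod_cast h0
      rw [Nat.floor_lt (by nlinarith [hs'.1])]
      have : s < 1 := lt_of_le_of_ne hs'.2 hs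
      nlinarith
    · filter_upwards [Measure.ae_ne volume (1:ℝ), hφ] with s hs h hs'
      rw [Set.uIoc_of_le zero_le_one] at hs'
      exact h ⟨hs'.1, lt_of_le_of_ne hs'.2 hs⟩
  refine h.congr' ?_
  filter_upwards [hN.eventually_gt_atTop 0] with i hi
  rw [sum_eq_integral hi]

lemma riemann_part {N : ι → ℕ} (hN : Tendsto N l atTop) {c : ι → ℕ → ℂ} {φ : ℝ → ℂ} {C : ℝ}
    (hb : ∀ᶠ i in l, ∀ k < N i, ‖(N i:ℂ) * c i k‖ ≤ C)
    (hφ : ∀ s : ℝ, s ∈ Set.Ioo (0:ℝ) 1 →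
      Tendsto (fun i => (N i:ℂ) * c i ⌊s * N i⌋₊) l (nhds (φ s)))
    {σ : ℝ} (hσ : σ ∈ Set.Ioo (0:ℝ) 1) :
    Tendsto (fun i => ∑ k ∈ range (⌊σ * N i⌋₊ + 1), c i k) l (nhds (∫ s in (0:ℝ)..σ, φ s)) := by
  have h := riemann (l := l) hN (c := fun i k => if k ≤ ⌊σ * N i⌋₊ then c i k else 0)
    (φ := Set.indicator (Set.Iic σ) φ) (C := C) ?_ ?_
  · have e : ∫ s in (0:ℝ)..1, Set.indicator (Set.Iic σ) φ s = ∫ s in (0:ℝ)..σ, φ s := by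
      have := intervalIntegral.integral_indicator (μ := volume) (f := φ)
        (a₁ := 0) (a₂ := σ) (a₃ := 1) ⟨hσ.1.le, hσ.2.le⟩
      exact this
    rw [e] at h
    refine h.congr' ?_
    filter_upwards [hN.eventually_gt_atTop 0] with i hi
    have h0' : (0:ℝ) < N i := by exact_mod_cast hi
    have hK : ⌊σ * N i⌋₊ < N i := by
      rw [Nat.floor_lt (by nlinarith [hσ.1])]
      nlinarith [hσ.2]
    rw [← Finset.sum_filter]
    congr 1
    ext k
    simp only [Finset.mem_filter, Finset.mem_range]
    omega
  · filter_upwards [hb] with i hi k hk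
    have hk' := hi k hk
    split_ifs
    · exact hk'
    · simpa using (norm_nonneg _).trans hk'
  · filter_upwards [Measure.ae_ne volume σ] with s hs hs'
    rcases lt_or_gt_of_ne hs with h | h
    · rw [Set.indicator_of_mem (Set.mem_Iic.2 h.le)]
      refine (hφ s hs').congr fun i => ?_
      rw [if_pos]
      exact Nat.floor_le_floor (by gcongr)
    · rw [Set.indicator_of_notMem (by simpa using h)]
      refine tendsto_const_nhds.congr' ?_
      have ht : Tendsto (fun i => (s - σ) * (N i : ℝ)) l atTop :=
        (tendsto_natCast_atTop_atTop.comp hN).const_mul_atTop (sub_pos.2 h)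
      filter_upwards [ht.eventually_gt_atTop 1] with i hi
      rw [if_neg, mul_zero]
      rw [not_le]
      have a1 := Nat.lt_floor_add_one (s * (N i:ℝ))
      have a2 := Nat.floor_le (a := σ * (N i:ℝ)) (mul_nonneg hσ.1.le (Nat.cast_nonneg _))
      have : (⌊σ * (N i:ℝ)⌋₊ : ℝ) < ⌊s * (N i:ℝ)⌋₊ := by nlinarith
      exact_mod_cast this

lemma riemann2 {N : ι → ℕ} (hN : Tendsto N l atTop) {c d : ι → ℕ → ℂ} {φ ψ : ℝ → ℂ} {C D : ℝ}
    (hb : ∀ᶠ i in l, ∀ k < N i, ‖(N i:ℂ) * c i k‖ ≤ C)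
    (hφ : ∀ s : ℝ, s ∈ Set.Ioo (0:ℝ) 1 →
      Tendsto (fun i => (N i:ℂ) * c i ⌊s * N i⌋₊) l (nhds (φ s)))
    (hd : ∀ᶠ i in l, ∀ k < N i, ‖(N i:ℂ) * d i k‖ ≤ D)
    (hψ : ∀ s : ℝ, s ∈ Set.Ioo (0:ℝ) 1 →
      Tendsto (fun i => (N i:ℂ) * d i ⌊s * N i⌋₊) l (nhds (ψ s))) :
    Tendsto (fun i => ∑ k ∈ range (N i), ∑ j ∈ range (k+1), c i k * d i j) l
      (nhds (∫ s in (0:ℝ)..1, φ s * ∫ t in (0:ℝ)..s, ψ t)) := by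
  simp_rw [← Finset.mul_sum]
  refine riemann (l := l) hN (C := C * D) ?_ ?_
  · filter_upwards [hb, hd, hN.eventually_gt_atTop 0] with i h1 h2 h0 k hk
    have hC := (norm_nonneg _).trans (h1 k hk)
    have h0' : (0:ℝ) < N i := by exact_mod_cast h0
    rw [← mul_assoc, norm_mul]
    refine mul_le_mul (h1 k hk) ?_ (norm_nonneg _) hC
    have hD := (norm_nonneg _).trans (h2 k hk)
    have h3 : ∀ j ∈ range (k+1), ‖d i j‖ ≤ D / N i := by
      intro j hj
      have := h2 j (by rw [Finset.mem_range] at hj; omega)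
      rw [norm_mul, Complex.norm_natCast] at this
      rw [le_div_iff₀ h0']; linarith
    refine (norm_sum_le_of_le _ h3).trans ?_
    rw [Finset.sum_const, Finset.card_range, nsmul_eq_mul, mul_div_assoc', div_le_iff₀ h0', mul_comm]
    have : ((k+1:ℕ):ℝ) ≤ N i := by exact_mod_cast hk
    gcongr
  · refine Eventually.of_forall fun s hs => ?_
    have := (hφ s hs).mul (riemann_part hN hd hψ hs)
    refine this.congr fun i => ?_
    ring

end riem

/-! ### Error function -/

lemma cerf_hasDerivAt (z : ℂ) :
    HasDerivAt cerf ((2 / (Real.sqrt Real.pi : ℂ)) * Complex.exp (-z^2)) z := by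
  obtain ⟨G, hG⟩ := Differentiable.isExactOn_univ (f := fun z : ℂ => Complex.exp (-z^2))
    (by fun_prop)
  have hG' : ∀ z, HasDerivAt G (Complex.exp (-z^2)) z := fun z => hG z (Set.mem_univ z)
  have e : cerf = fun z => (2 / (Real.sqrt Real.pi : ℂ)) * (G z - G 0) := by
    funext z
    unfold cerf
    congr 1
    have := intervalIntegral.integral_eq_sub_of_hasDerivAt (a := 0) (b := 1)
      (f := fun s : ℝ => G (s * z)) (f' := fun s : ℝ => z * Complex.exp (-((s:ℂ)^2 * z^2))) ?_ ?_
    · rw [this]; simp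
    · intro s _
      have h1 : HasDerivAt (fun s : ℝ => (s:ℂ) * z) (1 * z) s :=
        (Complex.ofRealCLM.hasDerivAt (x := s)).mul_const z
      have := (hG' (s * z)).comp_of_eq s h1 rfl
      refine this.congr_deriv ?_
      rw [mul_pow]; ring
    · apply Continuous.intervalIntegrable
      fun_prop
  rw [e]
  exact ((hG' z).sub_const _).const_mul _

def gz (z : ℂ) (u : ℝ) : ℂ := (Real.sqrt (2/Real.pi) : ℂ) * Complex.exp (-2*(z-u)^2)

lemma fz_hasDerivAt (z : ℂ) (u : ℝ) : HasDerivAt (fz z) (gz z u) u := by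
  have h1 : HasDerivAt (fun u : ℝ => (Real.sqrt 2 : ℂ) * (z - (u:ℂ)))
      ((Real.sqrt 2 : ℂ) * (-1)) u :=
    ((Complex.ofRealCLM.hasDerivAt (x := u)).const_sub z).const_mul _
  have h2 := (cerf_hasDerivAt ((Real.sqrt 2 : ℂ) * (z - (u:ℂ)))).comp_of_eq u h1 rfl
  have h3 := (h2.const_sub 1).const_mul (1/2 : ℂ)
  refine h3.congr_deriv ?_
  unfold gz
  have e : (Real.sqrt 2 : ℂ)^2 = 2 := by
    rw [← Complex.ofReal_pow, Real.sq_sqrt (by norm_num)]; norm_num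
  rw [mul_pow, e, Real.sqrt_div (by norm_num), show -(2*(z-u)^2) = -2*(z-u)^2 by ring]
  push_cast
  ring

lemma gz_cont (z : ℂ) : Continuous (gz z) := by unfold gz; fun_prop

lemma cerf_cont : Continuous cerf :=
  continuous_iff_continuousAt.2 fun z => (cerf_hasDerivAt z).continuousAt

lemma fz_cont2 {X : Type*} [TopologicalSpace X] {f : X → ℂ} {g : X → ℝ} (hf : Continuous f)
    (hg : Continuous g) : Continuous (fun x => fz (f x) (g x)) := by
  have := cerf_cont
  unfold fz cerfc
  fun_prop

lemma fz_cont (z : ℂ) : Continuous (fz z) :=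
  fz_cont2 continuous_const continuous_id

def Tz (α : ℝ) (z w : ℂ) : ℂ := ∫ u in (-α)..α, gz z u * (fz w u - fz w (-α))

lemma Tz_eq (α : ℝ) (z w : ℂ) :
    (∫ s in (0:ℝ)..1, (2*α*gz z (2*α*s-α)) * ∫ t in (0:ℝ)..s, (2*α*gz w (2*α*t-α))) =
    Tz α z w := by
  have h1 : ∀ s : ℝ, ∫ t in (0:ℝ)..s, (2*α*gz w (2*α*t-α)) = fz w (2*α*s-α) - fz w (-α) := by
    intro s
    have := intervalIntegral.integral_eq_sub_of_hasDerivAt (a := 0) (b := s)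
      (f := fun t : ℝ => fz w (2*α*t-α)) (f' := fun t : ℝ => (2*α*gz w (2*α*t-α))) ?_ ?_
    · rw [this]; simp
    · intro t _
      have h1 : HasDerivAt (fun t : ℝ => 2*α*t-α) (2*α) t := by
        simpa using ((hasDerivAt_id t).const_mul (2*α)).sub_const α
      have := (fz_hasDerivAt w (2*α*t-α)).scomp t h1
      refine this.congr_deriv ?_
      rw [Complex.real_smul]; push_cast; rfl
    · apply Continuous.intervalIntegrable
      have := gz_cont w
      fun_prop
  simp_rw [h1]
  have := intervalIntegral.smul_integral_comp_mul_sub (a := 0) (b := 1)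
    (fun u : ℝ => gz z u * (fz w u - fz w (-α))) (2*α) α
  rw [show 2*α*0-α = -α by ring, show 2*α*1-α=α by ring] at this
  unfold Tz
  rw [← this, Complex.real_smul, ← intervalIntegral.integral_const_mul]
  push_cast
  simp_rw [mul_assoc]

lemma Tz_expand (α : ℝ) (z w : ℂ) :
    Tz α z w = (∫ u in (-α)..α, gz z u * fz w u) - fz w (-α) * (fz z α - fz z (-α)) := by
  unfold Tz
  have c1 := gz_cont z
  have c2 := fz_cont w
  have i1 : IntervalIntegrable (fun u => gz z u * fz w u) volume (-α) α :=
    (c1.mul c2).intervalIntegrable _ _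
  have i2 : IntervalIntegrable (fun u => gz z u * fz w (-α)) volume (-α) α :=
    (c1.mul continuous_const).intervalIntegrable _ _
  simp_rw [mul_sub]
  rw [intervalIntegral.integral_sub i1 i2, intervalIntegral.integral_mul_const,
    intervalIntegral.integral_eq_sub_of_hasDerivAt (f := fz z) (fun u _ => fz_hasDerivAt z u)
      (c1.intervalIntegrable _ _)]
  ring

lemma target_eq (ρ : ℝ) (z w : ℂ) :
    Complex.exp (-z^2-w^2) * kweak ρ z w =
      (Real.sqrt Real.pi : ℂ) *
        (Tz (ρ/(2*Real.sqrt 2)) z w - Tz (ρ/(2*Real.sqrt 2)) w z) := by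
  unfold kweak
  rw [Tz_expand, Tz_expand]
  set α := ρ/(2*Real.sqrt 2)
  have e1 : Complex.exp (-z^2-w^2) * Complex.exp (z^2+w^2) = 1 := by
    rw [← Complex.exp_add, show -z^2-w^2+(z^2+w^2) = 0 by ring, Complex.exp_zero]
  have e2 : (∫ u in (-α)..α, Wr w z u) =
      (∫ u in (-α)..α, gz z u * fz w u) - ∫ u in (-α)..α, gz w u * fz z u := by
    have i1 : IntervalIntegrable (fun u => gz z u * fz w u) volume (-α) α :=
      ((gz_cont z).mul (fz_cont w)).intervalIntegrable _ _
    have i2 : IntervalIntegrable (fun u => gz w u * fz z u) volume (-α) α :=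
      ((gz_cont w).mul (fz_cont z)).intervalIntegrable _ _
    rw [← intervalIntegral.integral_sub i1 i2]
    congr 1
    funext u
    unfold Wr
    rw [(fz_hasDerivAt z u).deriv, (fz_hasDerivAt w u).deriv]
    ring
  rw [e2]
  linear_combination ((Real.sqrt Real.pi : ℂ) * (((∫ u in (-α)..α, gz z u * fz w u) - ∫ u in (-α)..α, gz w u * fz z u) + fz w α * fz z (-α) - fz z α * fz w (-α))) * e1

lemma Tz_cont (α : ℝ) : Continuous (fun q : ℂ × ℂ => Tz α q.1 q.2) := by
  unfold Tz
  apply intervalIntegral.continuous_parametric_intervalIntegral_of_continuous'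
  have h1 : Continuous (fun p : (ℂ × ℂ) × ℝ => fz p.1.2 p.2) :=
    fz_cont2 (by fun_prop) (by fun_prop)
  have h2 : Continuous (fun p : (ℂ × ℂ) × ℝ => fz p.1.2 (-α)) :=
    fz_cont2 (by fun_prop) continuous_const
  have h3 : Continuous (fun p : (ℂ × ℂ) × ℝ => gz p.1.1 p.2) := by
    unfold gz; fun_prop
  exact h3.mul (h1.sub h2)


/-! ### Exact rewriting of the rescaled kernel -/

def AA (N : ℕ) (M θ : ℝ) (h : ℂ) (k : ℕ) : ℂ :=
  (cf M (k - N/2 + θ) / Real.sqrt M : ℝ) * ex M (k - N/2 + θ) h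

lemma log_mul_pos {a b : ℂ} (ha : 0 < a.re) (hb : 0 < b.re) :
    Complex.log (a*b) = Complex.log a + Complex.log b := by
  have ha0 : a ≠ 0 := by rintro rfl; simp at ha
  have hb0 : b ≠ 0 := by rintro rfl; simp at hb
  have h1 := abs_lt.1 (Complex.abs_arg_lt_pi_div_two_iff.2 (Or.inl ha))
  have h2 := abs_lt.1 (Complex.abs_arg_lt_pi_div_two_iff.2 (Or.inl hb))
  exact Complex.log_mul ha0 hb0 ⟨by linarith, by linarith⟩

structure Good (h : ℂ) : Prop where
  h1 : 0 < (1+h).re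
  h2 : 0 < (1 + h^2/(2*(1+h))).re
  h3 : 0 < (1 + (1+h)^2).re

lemma Good.ne {h : ℂ} (g : Good h) : 1 + h ≠ 0 := by
  intro e; have := g.h1; rw [e] at this; simp at this

lemma Good.ne2 {h : ℂ} (g : Good h) : 1 + (1+h)^2 ≠ 0 := by
  intro e; have := g.h3; rw [e] at this; simp at this

lemma Good.log {h : ℂ} (g : Good h) : Complex.log (1 + (1+h)^2) =
    Real.log 2 + (Complex.log (1+h) + Complex.log (1 + h^2/(2*(1+h)))) := by
  have hn := g.ne
  have hn2 := g.ne2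
  have e : 1 + (1+h)^2 = ((2:ℝ):ℂ) * ((1+h) * (1 + h^2/(2*(1+h)))) := by
    push_cast; field_simp; ring
  rw [e, Complex.log_ofReal_mul two_pos, log_mul_pos g.h1 g.h2]
  intro e0; rw [e0, mul_zero] at e; exact hn2 e

lemma term_eq {M x : ℝ} {h : ℂ} (g : Good h) :
    (1 + (1+h)^2) ^ ((-(M-1/2) : ℝ) : ℂ) * (1+h) ^ ((2*x + (M-1/2) : ℝ) : ℂ) =
      (((2:ℝ)^(-(M-1/2)) : ℝ) : ℂ) * ex M x h := by
  rw [Complex.cpow_def_of_ne_zero g.ne2, Complex.cpow_def_of_ne_zero g.ne, ← Complex.exp_add, g.log,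
    Real.rpow_def_of_pos two_pos, Complex.ofReal_exp]
  unfold ex
  rw [← Complex.exp_add]
  congr 1
  push_cast
  ring

lemma AA_eq {N : ℕ} {M θ : ℝ} {h : ℂ} (g : Good h) (hM : 0 < M) (k : ℕ) :
    AA N M θ h k = Real.Gamma (M+1/2) *
      ((1 + (1+h)^2) ^ ((-(M-1/2) : ℝ) : ℂ) * (1+h) ^ ((2*(k-N/2+θ) + (M-1/2) : ℝ) : ℂ) /
      ((Real.Gamma (M/2+3/4+(k-N/2+θ)) : ℂ) * (Real.Gamma (M/2+3/4-(k-N/2+θ)) : ℂ))) := by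
  rw [term_eq g]
  have hs : Real.sqrt M ≠ 0 := (Real.sqrt_pos.2 hM).ne'
  unfold AA cf
  rw [mul_div_cancel_left₀ _ hs]
  push_cast
  ring

def Pre (M : ℝ) : ℝ := ((1+1^2 : ℝ) ^ (-3 : ℝ)) * ((M/4) ^ (-(3/2) : ℝ)) *
  (Real.pi * Real.Gamma (2*M+2) / 2^(2*M+1)) / Real.Gamma (M+1/2)^2

lemma Pre_eq {M : ℝ} (hM : 0 < M) :
    Pre M = Real.sqrt Real.pi * DG (M+1/2) * ((M+1/2)/M)^(3/2 : ℝ) := by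
  have hd := Real.Gamma_mul_Gamma_add_half (M+1)
  rw [show 2*(M+1) = 2*M+2 by ring, show (1:ℝ)-(2*M+2) = -(2*M+1) by ring,
    show M+1+1/2 = M+1/2+1 by ring, Real.Gamma_add_one (s := M+1/2) (by linarith),
    Real.rpow_neg two_pos.le] at hd
  have p1 := Real.Gamma_pos_of_pos (s := M+1/2) (by linarith)
  have p3 : 0 < Real.sqrt Real.pi := Real.sqrt_pos.2 Real.pi_pos
  have hpi := Real.mul_self_sqrt Real.pi_pos.le
  have h2 : (0:ℝ) < 2^(2*M+1) := Real.rpow_pos_of_pos two_pos _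
  have e1 : Real.pi * Real.Gamma (2*M+2) / 2^(2*M+1) =
      Real.sqrt Real.pi * (Real.Gamma (M+1) * ((M+1/2) * Real.Gamma (M+1/2))) := by
    rw [hd]; nth_rewrite 1 [← hpi]; field_simp
  have e2 : (M/4)^(-(3/2) : ℝ) = 8 / M^(3/2:ℝ) := by
    rw [Real.rpow_neg (by positivity), Real.div_rpow hM.le (by norm_num), inv_div]
    congr 1
    rw [show (4:ℝ) = 2^(2:ℝ) by norm_num, ← Real.rpow_mul two_pos.le]
    norm_num
  have e3 : (M+1/2)^(3/2:ℝ) = (M+1/2) * Real.sqrt (M+1/2) := by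
    rw [show (3/2:ℝ) = 1 + 1/2 by norm_num, Real.rpow_add (by linarith), Real.rpow_one,
      ← Real.sqrt_eq_rpow]
  have e4 : ((1:ℝ)+1^2)^(-3:ℝ) = 1/8 := by
    rw [Real.rpow_neg (by norm_num)]; norm_num
  have hs : 0 < Real.sqrt (M+1/2) := Real.sqrt_pos.2 (by linarith)
  have hss := Real.mul_self_sqrt (show 0 ≤ M+1/2 by linarith)
  have hM3 : 0 < M^(3/2:ℝ) := Real.rpow_pos_of_pos hM _
  unfold Pre DG
  rw [e1, e2, e4, Real.div_rpow (by linarith) hM.le, e3, show M+1/2+1/2 = M+1 by ring]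
  field_simp

lemma Pre_tendsto : Tendsto Pre atTop (nhds (Real.sqrt Real.pi)) := by
  have h1 : Tendsto (fun M : ℝ => (M+1/2)/M) atTop (nhds 1) := by
    have : Tendsto (fun M : ℝ => 1 + (1/2) * M⁻¹) atTop (nhds (1 + (1/2) * 0)) :=
      tendsto_const_nhds.add (Tendsto.const_mul _ tendsto_inv_atTop_zero)
    rw [mul_zero, add_zero] at this
    refine this.congr' ?_
    filter_upwards [eventually_gt_atTop 0] with s hs
    field_simp
  have h2 := h1.rpow_const (p := 3/2) (Or.inl one_ne_zero)
  have h3 := DG_tendsto.comp (tendsto_atTop_add_const_right atTop (1/2:ℝ) tendsto_id)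
  have h4 := (h3.const_mul (Real.sqrt Real.pi)).mul h2
  rw [Real.one_rpow, mul_one, mul_one] at h4
  refine h4.congr' ?_
  filter_upwards [eventually_gt_atTop 0] with s hs
  rw [Pre_eq hs]; rfl

lemma G_eq {N : ℕ} {n L M : ℝ} (hL : L = n - N) (hMe : M = n + L) (hM : 0 < M)
    {h k : ℂ} (g : Good h) (g' : Good k) :
    (1 + (1+h)^2) ^ ((-(M-1/2) : ℝ) : ℂ) * (1 + (1+k)^2) ^ ((-(M-1/2) : ℝ) : ℂ) *
      GK N n L (1+h) (1+k) =
    ((Real.pi * Real.Gamma (2*M+2) / 2^(2*M+1) / Real.Gamma (M+1/2)^2 : ℝ) : ℂ) *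
      ∑ i ∈ range N, ∑ j ∈ range (i+1), AA N M (3/4) h i * AA N M (1/4) k j := by
  have p1 : (Real.Gamma (M+1/2) : ℂ) ≠ 0 := by
    exact_mod_cast (Real.Gamma_pos_of_pos (s := M+1/2) (by linarith)).ne'
  unfold GK
  rw [show (2*n+2*L+2 : ℝ) = 2*M+2 by rw [hMe]; ring,
    show (2*n+2*L+1 : ℝ) = 2*M+1 by rw [hMe]; ring]
  simp only [Complex.Gamma_ofReal]
  have e2 : (2:ℂ) ^ ((2*M+1 : ℝ) : ℂ) = (((2:ℝ)^(2*M+1) : ℝ) : ℂ) := by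
    rw [Complex.ofReal_cpow two_pos.le]; norm_num
  rw [e2]
  simp only [Finset.mul_sum]
  refine Finset.sum_congr rfl fun i _ => Finset.sum_congr rfl fun j _ => ?_
  rw [AA_eq g hM, AA_eq g' hM]
  rw [show (2*((i:ℝ)-N/2+3/4) + (M-1/2) : ℝ) = 2*i+2*L+1 by rw [hMe, hL]; ring,
    show (2*((j:ℝ)-N/2+1/4) + (M-1/2) : ℝ) = 2*j+2*L by rw [hMe, hL]; ring,
    show M/2+3/4+((i:ℝ)-N/2+3/4) = i+L+3/2 by rw [hMe, hL]; ring,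
    show M/2+3/4-((i:ℝ)-N/2+3/4) = n-i by rw [hMe, hL]; ring,
    show M/2+3/4+((j:ℝ)-N/2+1/4) = j+L+1 by rw [hMe, hL]; ring,
    show M/2+3/4-((j:ℝ)-N/2+1/4) = n-j+1/2 by rw [hMe, hL]; ring]
  generalize (1 + (1+h)^2) ^ ((-(M-1/2) : ℝ) : ℂ) = a1
  generalize (1 + (1+k)^2) ^ ((-(M-1/2) : ℝ) : ℂ) = a2
  generalize (1+h) ^ ((2*i+2*L+1 : ℝ) : ℂ) = a3
  generalize (1+k) ^ ((2*j+2*L : ℝ) : ℂ) = a4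
  simp only [Complex.ofReal_div, Complex.ofReal_mul, Complex.ofReal_pow]
  generalize (Real.Gamma (M+1/2) : ℂ) = b at p1
  have : ∀ P D1 D2 D3 D4 T: ℂ, a1 * a2 * (P/T * (a3*a4/(D1*D2*D3*D4))) =
    P/T/b^2 * (b * (a1*a3/(D1*D2)) * (b*(a2*a4/(D4*D3)))) := by
    intro P D1 D2 D3 D4 T
    have hb : b * b⁻¹ = 1 := mul_inv_cancel₀ p1
    simp only [div_eq_mul_inv, mul_inv]
    linear_combination (-(a1*a2*P*T⁻¹*a3*a4*D1⁻¹*D2⁻¹*D3⁻¹*D4⁻¹)*(b*b⁻¹+1)) * hb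
  exact this _ _ _ _ _ _

lemma scale_eq {N : ℕ} (hN : 0 < N) {n L M : ℝ} (hMe : M = n + L) :
    N * dlt N n L 1 = M/4 := by
  have : (N:ℝ) ≠ 0 := by exact_mod_cast hN.ne'
  unfold dlt
  rw [Real.rpow_neg (by norm_num), hMe]
  norm_num
  field_simp

lemma sc_eq {N : ℕ} (hN : 0 < N) {n L M : ℝ} (hMe : M = n + L) (hM : 0 < M) :
    sc N n L 1 = Real.sqrt M / 2 := by
  unfold sc
  rw [scale_eq hN hMe, Real.sqrt_div hM.le, show (4:ℝ) = 2^2 by norm_num,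
    Real.sqrt_sq (by norm_num)]

lemma resc_eq {N : ℕ} (hN : 0 < N) {n L M : ℝ} (hL : L = n - N) (hMe : M = n + L) (hM : 0 < M)
    {z w : ℂ} (g : Good (z / sc N n L 1)) (g' : Good (w / sc N n L 1)) :
    resc N n L 1 z w = (Pre M : ℂ) *
      ((∑ i ∈ range N, ∑ j ∈ range (i+1),
        AA N M (3/4) (z / sc N n L 1) i * AA N M (1/4) (w / sc N n L 1) j) -
      (∑ i ∈ range N, ∑ j ∈ range (i+1),
        AA N M (3/4) (w / sc N n L 1) i * AA N M (1/4) (z / sc N n L 1) j)) := by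
  unfold resc KK
  rw [scale_eq hN hMe]
  generalize hh : z / (sc N n L 1 : ℂ) = h at g ⊢
  generalize hk : w / (sc N n L 1 : ℂ) = k at g' ⊢
  rw [Complex.ofReal_one]
  have e1 : ((1 + (1+h)^2) * (1 + (1+k)^2)) ^ ((-(n+L-1/2) : ℝ) : ℂ) =
      (1 + (1+h)^2) ^ ((-(M-1/2) : ℝ) : ℂ) * (1 + (1+k)^2) ^ ((-(M-1/2) : ℝ) : ℂ) := by
    rw [← hMe, Complex.cpow_def_of_ne_zero (mul_ne_zero g.ne2 g'.ne2),
      Complex.cpow_def_of_ne_zero g.ne2, Complex.cpow_def_of_ne_zero g'.ne2,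
      log_mul_pos g.h3 g'.h3, ← Complex.exp_add, add_mul]
  have G1 := G_eq hL hMe hM g g'
  have G2 := G_eq hL hMe hM g' g
  rw [e1]
  unfold Pre
  rw [mul_div_assoc, Complex.ofReal_mul, Complex.ofReal_mul]
  linear_combination ((((1+1^2 : ℝ) ^ (-3 : ℝ) : ℝ) : ℂ) * (((M/4) ^ (-(3/2) : ℝ) : ℝ) : ℂ)) * (G1 - G2)

/-! ### Final assembly -/

section final
variable {ι : Type*} {l : Filter ι}

lemma good_ev {h : ι → ℂ} (hh : Tendsto h l (nhds 0)) : ∀ᶠ i in l, Good (h i) := by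
  have c1 : Tendsto (fun i => (1 + h i).re) l (nhds (1+0:ℂ).re) :=
    (Complex.continuous_re.tendsto _).comp (hh.const_add 1)
  have c2 : Tendsto (fun i => (1 + h i^2/(2*(1+h i))).re) l (nhds (1+0^2/(2*(1+0)):ℂ).re) :=
    (Complex.continuous_re.tendsto _).comp
      (((hh.pow 2).div ((hh.const_add 1).const_mul 2) (by norm_num)).const_add 1)
  have c3 : Tendsto (fun i => (1 + (1+h i)^2).re) l (nhds (1+(1+0)^2:ℂ).re) :=
    (Complex.continuous_re.tendsto _).comp (((hh.const_add 1).pow 2).const_add 1)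
  filter_upwards [c1.eventually_const_lt (show (0:ℝ) < (1+0:ℂ).re by norm_num),
    c2.eventually_const_lt (show (0:ℝ) < (1+0^2/(2*(1+0)):ℂ).re by norm_num),
    c3.eventually_const_lt (show (0:ℝ) < (1+(1+0)^2:ℂ).re by norm_num)] with i a b c
  exact ⟨a, b, c⟩

lemma AA_bound {N : ι → ℕ} {M : ι → ℝ} {h : ι → ℂ} {z : ℂ} {α θ : ℝ}
    (hN : Tendsto N l atTop) (hM : Tendsto M l atTop)
    (hNM : Tendsto (fun i => (N i : ℝ) / Real.sqrt (M i)) l (nhds (2*α)))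
    (hh : Tendsto (fun i => (Real.sqrt (M i) : ℂ) * h i) l (nhds (2*z)))
    (h0 : 0 ≤ θ) (h1 : θ ≤ 1) :
    ∃ C, ∀ᶠ i in l, ∀ k < N i, ‖(N i : ℂ) * AA (N i) (M i) θ (h i) k‖ ≤ C := by
  obtain ⟨C, hC⟩ := ex_bound hM hh (2*α+1)
  refine ⟨(2*α+1) * 1 * C, ?_⟩
  have hsi : Tendsto (fun i => (Real.sqrt (M i))⁻¹) l (nhds 0) :=
    tendsto_inv_atTop_zero.comp (Real.tendsto_sqrt_atTop.comp hM)
  have hq := hNM.mul hsi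
  rw [mul_zero] at hq
  filter_upwards [hC, hM.eventually cf_bound, hM.eventually_gt_atTop 0, hN.eventually_ge_atTop 2,
    hNM.eventually_lt_const (lt_add_one _), hq.eventually_lt_const (show (0:ℝ) < 1/2 by norm_num)]
    with i c1 c2 c3 c4 c5 c6 k hk
  have hs := Real.sqrt_pos.2 c3
  rw [← div_eq_mul_inv, div_div, Real.mul_self_sqrt c3.le, div_lt_iff₀ c3] at c6
  have c5' := c5
  rw [div_lt_iff₀ hs] at c5'
  have hk' : (k:ℝ) + 1 ≤ N i := by exact_mod_cast hk
  have hN2 : (2:ℝ) ≤ N i := by exact_mod_cast c4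
  have hk0 : (0:ℝ) ≤ k := Nat.cast_nonneg k
  have hx : |(k:ℝ) - N i/2 + θ| ≤ N i := by rw [abs_le]; constructor <;> linarith
  have d1 := c1 _ (hx.trans c5'.le)
  have d2 := c2 _ (lt_of_le_of_lt hx (by linarith))
  have hA : ‖(N i : ℂ) * AA (N i) (M i) θ (h i) k‖ =
      ((N i : ℝ) / Real.sqrt (M i)) * |cf (M i) (k - N i/2 + θ)| *
        ‖ex (M i) (k - N i/2 + θ) (h i)‖ := by
    unfold AA
    rw [norm_mul, norm_mul, Complex.norm_natCast, Complex.norm_real, Real.norm_eq_abs, abs_div,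
      abs_of_pos hs]
    ring
  rw [hA]
  have : 0 ≤ (N i : ℝ) / Real.sqrt (M i) := by positivity
  have : 0 ≤ 2*α+1 := this.trans c5.le
  gcongr

lemma AA_tendsto {N : ι → ℕ} {M : ι → ℝ} {h : ι → ℂ} {z : ℂ} {α θ : ℝ}
    (hN : Tendsto N l atTop) (hM : Tendsto M l atTop)
    (hNM : Tendsto (fun i => (N i : ℝ) / Real.sqrt (M i)) l (nhds (2*α)))
    (hh : Tendsto (fun i => (Real.sqrt (M i) : ℂ) * h i) l (nhds (2*z)))
    (s : ℝ) (hs : s ∈ Set.Ioo (0:ℝ) 1) :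
    Tendsto (fun i => (N i : ℂ) * AA (N i) (M i) θ (h i) ⌊s * N i⌋₊) l
      (nhds (2*α*gz z (2*α*s-α))) := by
  have hNr : Tendsto (fun i => (N i : ℝ)) l atTop := tendsto_natCast_atTop_atTop.comp hN
  have hx : Tendsto (fun i => ((⌊s * N i⌋₊ : ℝ) - N i/2 + θ) / Real.sqrt (M i)) l
      (nhds (2*α*s-α)) := by
    have f1 := (tendsto_nat_floor_mul_div_atTop hs.1.le).comp hNr
    have f2 : Tendsto (fun i => θ * (N i:ℝ)⁻¹) l (nhds (θ * 0)) :=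
      (tendsto_inv_atTop_zero.comp hNr).const_mul θ
    have f3 := hNM.mul ((f1.sub_const (1/2)).add f2)
    rw [show 2*α*(s-1/2+θ*0) = 2*α*s-α by ring] at f3
    refine f3.congr' ?_
    filter_upwards [hN.eventually_gt_atTop 0] with i hi
    have : (N i:ℝ) ≠ 0 := by exact_mod_cast hi.ne'
    simp only [Function.comp]
    field_simp
  have e1 : Tendsto (fun i => (((N i : ℝ) / Real.sqrt (M i) *
      cf (M i) ((⌊s * N i⌋₊ : ℝ) - N i/2 + θ) : ℝ) : ℂ)) l _ :=
    (Complex.continuous_ofReal.tendsto _).comp (hNM.mul (cf_tendsto hM hx))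
  have e2 := e1.mul (ex_tendsto hM hh hx)
  have e3 : (((2*α * (Real.sqrt (2/Real.pi) * Real.exp (-(2*(2*α*s-α)^2))) : ℝ)) : ℂ) *
      Complex.exp (4*((2*α*s-α : ℝ):ℂ)*z - 2*z^2) = 2*α*gz z (2*α*s-α) := by
    unfold gz
    have : Complex.exp (-2*(z-((2*α*s-α : ℝ):ℂ))^2) =
        Complex.exp (-(2*((2*α*s-α : ℝ):ℂ)^2)) * Complex.exp (4*((2*α*s-α : ℝ):ℂ)*z - 2*z^2) := by
      rw [← Complex.exp_add]; congr 1; ring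
    rw [this]
    push_cast
    ring
  rw [e3] at e2
  refine e2.congr fun i => ?_
  unfold AA
  push_cast
  ring

end final

lemma M_facts (ρ : ℝ) (hρ : 0 < ρ) :
    Tendsto (fun N : ℕ => 2*((N:ℝ)^2/ρ^2) - N) atTop atTop ∧
    Tendsto (fun N : ℕ => (N:ℝ)/Real.sqrt (2*((N:ℝ)^2/ρ^2) - N)) atTop
      (nhds (2*(ρ/(2*Real.sqrt 2)))) := by
  have hNr : Tendsto (fun N : ℕ => (N : ℝ)) atTop atTop := tendsto_natCast_atTop_atTop
  have hi : Tendsto (fun N : ℕ => (N : ℝ)⁻¹) atTop (nhds 0) := tendsto_inv_atTop_zero.comp hNr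
  have hr : Tendsto (fun N : ℕ => 2/ρ^2 - (N:ℝ)⁻¹) atTop (nhds (2/ρ^2)) := by
    simpa using hi.const_sub (2/ρ^2)
  have hp : 0 < 2/ρ^2 := by positivity
  have hM : Tendsto (fun N : ℕ => 2*((N:ℝ)^2/ρ^2) - N) atTop atTop := by
    have := (hNr.atTop_mul_atTop₀ hNr).atTop_mul_pos hp hr
    refine this.congr' ?_
    filter_upwards [eventually_gt_atTop 0] with N hN
    have : (N:ℝ) ≠ 0 := by exact_mod_cast hN.ne'
    field_simp
  refine ⟨hM, ?_⟩
  have h2 := ((Real.continuous_sqrt.tendsto _).comp hr).inv₀ (Real.sqrt_pos.2 hp).ne'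
  have e : (Real.sqrt (2/ρ^2))⁻¹ = 2*(ρ/(2*Real.sqrt 2)) := by
    rw [Real.sqrt_div two_pos.le, Real.sqrt_sq hρ.le, inv_div]
    field_simp
  rw [e] at h2
  refine h2.congr' ?_
  filter_upwards [eventually_gt_atTop 0] with N hN
  have h0 : (0:ℝ) < N := by exact_mod_cast hN
  have : 2*((N:ℝ)^2/ρ^2) - N = N^2 * (2/ρ^2 - (N:ℝ)⁻¹) := by field_simp
  rw [this, Real.sqrt_mul (by positivity), Real.sqrt_sq h0.le]
  simp only [Function.comp]
  rw [div_mul_eq_div_div, div_self h0.ne', one_div]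

lemma main_lim (ρ : ℝ) (hρ : 0 < ρ) (q : ℂ × ℂ) :
    Tendsto (fun y : ℕ × (ℂ × ℂ) =>
      resc y.1 ((y.1:ℝ)^2/ρ^2) ((y.1:ℝ)^2/ρ^2 - y.1) 1 y.2.1 y.2.2) (atTop ×ˢ nhds q)
      (nhds ((Real.sqrt Real.pi : ℂ) *
        (Tz (ρ/(2*Real.sqrt 2)) q.1 q.2 - Tz (ρ/(2*Real.sqrt 2)) q.2 q.1))) := by
  set l : Filter (ℕ × (ℂ × ℂ)) := atTop ×ˢ nhds q with hl
  set α := ρ/(2*Real.sqrt 2) with hα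
  have hN : Tendsto (fun y : ℕ × (ℂ × ℂ) => y.1) l atTop := tendsto_fst
  have hq : Tendsto (fun y : ℕ × (ℂ × ℂ) => y.2) l (nhds q) := tendsto_snd
  have hz : Tendsto (fun y : ℕ × (ℂ × ℂ) => y.2.1) l (nhds q.1) :=
    (continuous_fst.tendsto q).comp hq
  have hw : Tendsto (fun y : ℕ × (ℂ × ℂ) => y.2.2) l (nhds q.2) :=
    (continuous_snd.tendsto q).comp hq
  set M : ℕ × (ℂ × ℂ) → ℝ := fun y => 2*((y.1:ℝ)^2/ρ^2) - y.1 with hMdef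
  have hM : Tendsto M l atTop := (M_facts ρ hρ).1.comp hN
  have hNM : Tendsto (fun y => (y.1:ℝ) / Real.sqrt (M y)) l (nhds (2*α)) :=
    (M_facts ρ hρ).2.comp hN
  set S : ℕ × (ℂ × ℂ) → ℝ := fun y => sc y.1 ((y.1:ℝ)^2/ρ^2) ((y.1:ℝ)^2/ρ^2 - y.1) 1 with hS
  have hMe : ∀ y : ℕ × (ℂ × ℂ), M y = (y.1:ℝ)^2/ρ^2 + ((y.1:ℝ)^2/ρ^2 - y.1) := fun y => by
    simp only [hMdef]; ring
  have hSe : ∀ᶠ y in l, S y = Real.sqrt (M y) / 2 := by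
    filter_upwards [hN.eventually_gt_atTop 0, hM.eventually_gt_atTop 0] with y h1 h2
    exact sc_eq h1 (hMe y) h2
  have key : ∀ (v : ℕ × (ℂ × ℂ) → ℂ) (v0 : ℂ), Tendsto v l (nhds v0) →
      Tendsto (fun y => (Real.sqrt (M y) : ℂ) * (v y / (S y : ℂ))) l (nhds (2*v0)) := by
    intro v v0 hv
    refine (hv.const_mul 2).congr' ?_
    filter_upwards [hSe, hM.eventually_gt_atTop 0] with y h1 h2
    have : (Real.sqrt (M y) : ℂ) ≠ 0 := by exact_mod_cast (Real.sqrt_pos.2 h2).ne'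
    rw [h1]; push_cast; field_simp
  have kz := key _ _ hz
  have kw := key _ _ hw
  have gzz := good_ev (h_zero hM kz)
  have gw := good_ev (h_zero hM kw)
  have dbl : ∀ (v v' : ℕ × (ℂ × ℂ) → ℂ) (v0 v0' : ℂ),
      Tendsto (fun y => (Real.sqrt (M y) : ℂ) * v y) l (nhds (2*v0)) →
      Tendsto (fun y => (Real.sqrt (M y) : ℂ) * v' y) l (nhds (2*v0')) →
      Tendsto (fun y => ∑ i ∈ range y.1, ∑ j ∈ range (i+1),
        AA y.1 (M y) (3/4) (v y) i * AA y.1 (M y) (1/4) (v' y) j) l (nhds (Tz α v0 v0')) := by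
    intro v v' v0 v0' h1 h2
    obtain ⟨C, hC⟩ := AA_bound (θ := 3/4) hN hM hNM h1 (by norm_num) (by norm_num)
    obtain ⟨D, hD⟩ := AA_bound (θ := 1/4) hN hM hNM h2 (by norm_num) (by norm_num)
    rw [← Tz_eq]
    exact riemann2 (l := l) hN (c := fun y k => AA y.1 (M y) (3/4) (v y) k)
      (d := fun y k => AA y.1 (M y) (1/4) (v' y) k) hC (AA_tendsto hN hM hNM h1) hD
      (AA_tendsto hN hM hNM h2)
  have hP : Tendsto (fun y => (Pre (M y) : ℂ)) l (nhds (Real.sqrt Real.pi : ℂ)) :=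
    (Complex.continuous_ofReal.tendsto _).comp (Pre_tendsto.comp hM)
  have fin := hP.mul ((dbl _ _ _ _ kz kw).sub (dbl _ _ _ _ kw kz))
  refine fin.congr' ?_
  filter_upwards [gzz, gw, hN.eventually_gt_atTop 0, hM.eventually_gt_atTop 0] with y g1 g2 h1 h2
  exact (resc_eq h1 rfl (hMe y) h2 g1 g2).symm

lemma unif_of_lim {F : ℕ → ℂ × ℂ → ℂ} {f : ℂ × ℂ → ℂ} (hc : Continuous f)
    (h : ∀ q, Tendsto (fun y : ℕ × (ℂ × ℂ) => F y.1 y.2) (atTop ×ˢ nhds q) (nhds (f q)))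
    {K : Set (ℂ × ℂ)} (hK : IsCompact K) (S : Set ℕ) :
    TendstoUniformlyOn F f (atTop ⊓ 𝓟 S) K := by
  rw [← tendstoLocallyUniformlyOn_iff_tendstoUniformlyOn_of_compact hK,
    tendstoLocallyUniformlyOn_iff_forall_tendsto]
  intro q _
  have h1 := (hc.tendsto q).comp (tendsto_snd (f := (atTop : Filter ℕ)) (g := nhds q))
  have h2 := (h1.prodMk_nhds (h q)).mono_right (nhds_le_uniformity _)
  exact h2.mono_left (Filter.prod_mono inf_le_left nhdsWithin_le_nhds)

lemma lim_cont (α : ℝ) : Continuous (fun q : ℂ × ℂ => (Real.sqrt Real.pi : ℂ) *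
    (Tz α q.1 q.2 - Tz α q.2 q.1)) := by
  have h1 := Tz_cont α
  have h2 : Continuous (fun q : ℂ × ℂ => Tz α q.2 q.1) := by
    have := h1.comp continuous_swap
    simpa only [Function.comp_def, Prod.fst_swap, Prod.snd_swap] using this
  exact continuous_const.mul (h1.sub h2)

/-- equation (2.15), case (b): kernel convergence in the weak
non-unitarity regime (zooming point `p = 1`). -/
theorem kernel_convergence_weak (ρ : ℝ) (hρ : 0 < ρ) (K : Set (ℂ × ℂ)) (hK : IsCompact K) :
    TendstoUniformlyOn
      (fun (N : ℕ) (q : ℂ × ℂ) => resc N ((N:ℝ)^2/ρ^2) ((N:ℝ)^2/ρ^2 - N) 1 q.1 q.2)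
      (fun q => Complex.exp (-q.1^2-q.2^2) * kweak ρ q.1 q.2)
      (atTop ⊓ 𝓟 (Sweak ρ)) K := by
  have e : (fun q : ℂ × ℂ => Complex.exp (-q.1^2-q.2^2) * kweak ρ q.1 q.2) =
      fun q => (Real.sqrt Real.pi : ℂ) *
        (Tz (ρ/(2*Real.sqrt 2)) q.1 q.2 - Tz (ρ/(2*Real.sqrt 2)) q.2 q.1) := by
    funext q
    exact target_eq ρ q.1 q.2
  rw [e]
  exact unif_of_lim (lim_cont _) (main_lim ρ hρ) hK _

end SI
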